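/- Let P be the R-measure, c = (1/2, √3/6), and let ℓ ≥ 1 and n satisfy 3^ℓ < n ≤ 2·3^ℓ. Let α₂ be any optimal set of two-means for P and let J ⊆ {1,2,3}^ℓ with card J = n − 3^ℓ. Then the set { S_ω(c) : ω ∈ {1,2,3}^ℓ \ J } ∪ ⋃_{ω ∈ J} S_ω(α₂) is an optimal set of n-means for P, where S_ω(α₂) = {S_ω(a) : a ∈ α₂}. -/

import Mathlib

open MeasureTheory ENNReal

noncomputable section

abbrev E2 : Type := EuclideanSpace ℝ (Fin 2)

/-- The point (a, b) of the Euclidean plane. -/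
def pt (a b : ℝ) : E2 := (WithLp.equiv 2 (Fin 2 → ℝ)).symm ![a, b]

/-- S₁(x) = x/3. -/
def S1 : E2 → E2 := fun x => (3 : ℝ)⁻¹ • x

/-- S₂(x) = x/3 + (2/3, 0). -/
def S2 : E2 → E2 := fun x => (3 : ℝ)⁻¹ • x + pt (2/3) 0

/-- S₃(x) = x/3 + (1/3, √3/3). -/
def S3 : E2 → E2 := fun x => (3 : ℝ)⁻¹ • x + pt (1/3) (Real.sqrt 3 / 3)

def Smap : Fin 3 → E2 → E2 := ![S1, S2, S3]

/-- For a word ω = ω₁⋯ω_k ∈ {1,2,3}^k, the composition S_ω = S_{ω₁} ∘ ⋯ ∘ S_{ω_k}. -/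
def Sword {k : ℕ} (ω : Fin k → Fin 3) : E2 → E2 :=
  fun x => (List.ofFn fun i => Smap (ω i)).foldr (fun g y => g y) x

/-- The closed triangle with vertices (0,0), (1,0), (1/2, √3/2). -/
def Tri : Set E2 := convexHull ℝ {pt 0 0, pt 1 0, pt (1/2) (Real.sqrt 3 / 2)}

/-- The distortion error ∫ min_{a ∈ α} ‖x − a‖² dμ of a set α of points. -/
def err (μ : Measure E2) (α : Set E2) : ℝ≥0∞ :=
  ∫⁻ x, ⨅ a ∈ α, ENNReal.ofReal (‖x - a‖ ^ 2) ∂μ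

/-- The n-th quantization error V_n(μ). -/
def quantErr (μ : Measure E2) (n : ℕ) : ℝ≥0∞ :=
  ⨅ (α : Set E2) (_ : α.Finite ∧ α.ncard ≤ n), err μ α

/-- α is an optimal set of n-means for μ. -/
def IsOptimal (μ : Measure E2) (n : ℕ) (α : Set E2) : Prop :=
  α.Finite ∧ α.ncard ≤ n ∧ err μ α = quantErr μ n

/-!
Fix the level `ℓ` and rescale every cell of that level to unit size. With `V₁ = 1 / 6` and
`V₂ = 5 / 54` the first two quantization errors, charge the price `V₁ - V₂ = 2 / 27` for each point.
A cell that is served from its centroid, and equally a cell that is served from an optimal pair,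
then costs `V₁ + 2 / 27 = 13 / 54`, so optimality of the mixed configurations amounts to the weak
duality bound `3 ^ ℓ * (13 / 54) ≤ 27 ^ ℓ * err P α + α.ncard * (2 / 27)` for every finite set `α`.

Compare the cost of `α` with the benchmark in which each cell is served from its centroid at cost
`‖x - centroid‖ ^ 2 + 2 / 27`. It suffices that a single point `a`, on all the cells of level `ℓ`
together, falls below this benchmark by at most `2 / 27`. On one cell the saving is the integral of
the positive part of an affine function of `x`. This is a convex function, so by self-similarity it
is at most its mean over the nine vertices of the three cells of the next level, and the claim for
`ℓ = 0` becomes a finite problem about these vertices. For larger `ℓ` the point is inspected through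
the three maps `zoom i`: its images are far apart, so that at most one of them saves anything,
except near the place where two cells face each other, and there the two savings are small.
-/

/-! ### The gasket in barycentric coordinates -/

/-- The vertices of the triangle `Tri`, which are the fixed points of the maps `Smap i`. -/
def vertex : Fin 3 → E2 := ![pt 0 0, pt 1 0, pt (1 / 2) (√3 / 2)]

/-- The centroid of `Tri`, the mean of the R-measure. -/
def centroid : E2 := pt (1 / 2) (√3 / 6)

/-- The barycentric coordinates with respect to `vertex`. -/
def bary (k : Fin 3) (x : E2) : ℝ :=
  ![1 - x 0 - x 1 / √3, x 0 - x 1 / √3, 2 * x 1 / √3] k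

/-- The inverse of `Smap i`: it blows the cell `Smap i '' Tri` up to `Tri`. -/
def zoom (i : Fin 3) : E2 → E2 := AffineMap.homothety (vertex i) (3 : ℝ)

lemma pt_apply_zero (a b : ℝ) : pt a b 0 = a := rfl

lemma pt_apply_one (a b : ℝ) : pt a b 1 = b := rfl

lemma Smap_eq_homothety (i : Fin 3) : Smap i = AffineMap.homothety (vertex i) (3⁻¹ : ℝ) := by
  funext x
  ext j
  fin_cases i <;> fin_cases j <;>
    simp [Smap, S1, S2, S3, vertex, AffineMap.homothety_apply, pt_apply_zero, pt_apply_one] <;> ring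

lemma Smap_apply (i : Fin 3) (x : E2) :
    Smap i x = (3⁻¹ : ℝ) • x + (2 / 3 : ℝ) • vertex i := by
  rw [Smap_eq_homothety, AffineMap.homothety_apply, vsub_eq_sub, vadd_eq_add]
  module

lemma zoom_apply (i : Fin 3) (x : E2) : zoom i x = (3 : ℝ) • x - (2 : ℝ) • vertex i := by
  rw [zoom, AffineMap.homothety_apply, vsub_eq_sub, vadd_eq_add]
  module

lemma zoom_Smap (i : Fin 3) (x : E2) : zoom i (Smap i x) = x := by
  rw [zoom_apply, Smap_apply]
  module

lemma Smap_zoom (i : Fin 3) (x : E2) : Smap i (zoom i x) = x := by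
  rw [zoom_apply, Smap_apply]
  module

lemma continuous_Smap (i : Fin 3) : Continuous (Smap i) := by
  simp only [funext (Smap_apply i)]
  fun_prop

lemma measurable_Smap (i : Fin 3) : Measurable (Smap i) := (continuous_Smap i).measurable

lemma norm_Smap_sub (i : Fin 3) (x a : E2) : ‖Smap i x - a‖ = 3⁻¹ * ‖x - zoom i a‖ := by
  have : Smap i x - a = (3⁻¹ : ℝ) • (x - zoom i a) := by
    rw [Smap_apply, zoom_apply]
    module
  rw [this, norm_smul, Real.norm_of_nonneg (by norm_num)]

lemma continuous_bary (k : Fin 3) : Continuous (bary k) := by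
  unfold bary
  fin_cases k <;> simp only [Fin.zero_eta, Fin.mk_one, Fin.reduceFinMk, Matrix.cons_val] <;>
    fun_prop

lemma sum_bary (x : E2) : ∑ k, bary k x = 1 := by
  simp only [Fin.sum_univ_three, bary, Matrix.cons_val]
  ring

lemma sum_bary_smul_vertex (x : E2) : ∑ k, bary k x • vertex k = x := by
  ext j
  fin_cases j
  · simp [Fin.sum_univ_three, bary, vertex, pt_apply_zero]
    ring
  · simp [Fin.sum_univ_three, bary, vertex, pt_apply_one]
    field_simp

lemma bary_vertex (i k : Fin 3) : bary k (vertex i) = if i = k then 1 else 0 := by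
  fin_cases i <;> fin_cases k <;> simp [bary, vertex, pt_apply_zero, pt_apply_one]
    <;> field_simp <;> norm_num

lemma bary_Smap (i k : Fin 3) (x : E2) :
    bary k (Smap i x) = (bary k x + 2 * if i = k then 1 else 0) / 3 := by
  rw [← bary_vertex, Smap_apply]
  fin_cases k <;> simp [bary] <;> ring

lemma bary_zoom (i k : Fin 3) (x : E2) :
    bary k (zoom i x) = 3 * bary k x - 2 * if i = k then 1 else 0 := by
  have := bary_Smap i k (zoom i x)
  rw [Smap_zoom] at this
  linarith

lemma bary_centroid (k : Fin 3) : bary k centroid = 1 / 3 := by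
  fin_cases k <;> simp [bary, centroid, pt_apply_zero, pt_apply_one] <;> field_simp <;> norm_num

lemma norm_sub_sq_eq_sum_bary (x y : E2) :
    ‖x - y‖ ^ 2 = (∑ k, (bary k x - bary k y) ^ 2) / 2 := by
  have h : √3 ^ 2 = 3 := Real.sq_sqrt (by norm_num)
  simp only [EuclideanSpace.norm_sq_eq, Fin.sum_univ_two, Fin.sum_univ_three, PiLp.sub_apply,
    Real.norm_eq_abs, sq_abs, bary, Matrix.cons_val]
  field_simp
  linear_combination (2 * (x 1 - y 1) ^ 2) * h

lemma norm_vertex_sub_vertex_sq {i j : Fin 3} (hij : i ≠ j) : ‖vertex i - vertex j‖ ^ 2 = 1 := by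
  rw [norm_sub_sq_eq_sum_bary]
  simp only [bary_vertex, Fin.sum_univ_three]
  fin_cases i <;> fin_cases j <;> simp at hij ⊢

lemma norm_vertex_sub_centroid_le (i : Fin 3) : ‖vertex i - centroid‖ ≤ 3 / 5 := by
  have : ‖vertex i - centroid‖ ^ 2 = 1 / 3 := by
    rw [norm_sub_sq_eq_sum_bary]
    fin_cases i <;> simp [Fin.sum_univ_three, bary_vertex, bary_centroid] <;> norm_num
  exact le_of_sq_le_sq (by linarith) (by norm_num)

lemma norm_Smap_sub_centroid_le (i : Fin 3) (x : E2) :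
    ‖Smap i x - centroid‖ ≤ ‖x - centroid‖ / 3 + 2 / 5 := by
  have h : Smap i x - centroid
      = (3⁻¹ : ℝ) • (x - centroid) + (2 / 3 : ℝ) • (vertex i - centroid) := by
    rw [Smap_apply]
    module
  have := norm_add_le ((3⁻¹ : ℝ) • (x - centroid)) ((2 / 3 : ℝ) • (vertex i - centroid))
  rw [← h, norm_smul, norm_smul, Real.norm_of_nonneg (by norm_num),
    Real.norm_of_nonneg (by norm_num)] at this
  linarith [norm_vertex_sub_centroid_le i]

lemma sum_Smap_sub_centroid (x : E2) : ∑ i, (Smap i x - centroid) = x - centroid := by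
  have : ∑ i, vertex i = (3 : ℝ) • centroid := by
    rw [← sum_bary_smul_vertex centroid]
    simp only [bary_centroid, ← Finset.smul_sum, smul_smul]
    norm_num
  simp only [Smap_apply, Finset.sum_sub_distrib, Finset.sum_add_distrib, ← Finset.smul_sum, this,
    Finset.sum_const, Finset.card_univ, Fintype.card_fin]
  module

lemma sum_norm_Smap_sub_centroid_sq (x : E2) :
    ∑ i, ‖Smap i x - centroid‖ ^ 2 = ‖x - centroid‖ ^ 2 / 3 + 4 / 9 := by
  simp only [norm_sub_sq_eq_sum_bary, bary_Smap, bary_centroid, Fin.sum_univ_three, Fin.isValue,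
    Fin.reduceEq, ↓reduceIte]
  ring

/-! ### Integration against the R-measure -/

/-- The R-measure: the self-similar probability measure of the maps `Smap i` with equal weights. -/
class IsRMeasure (P : Measure E2) : Prop extends IsProbabilityMeasure P where
  eq_smul_sum_map : P = (3⁻¹ : ℝ≥0∞) • ∑ i, P.map (Smap i)

namespace IsRMeasure

variable {P : Measure E2} [IsRMeasure P]

lemma lintegral_eq {f : E2 → ℝ≥0∞} (hf : Measurable f) :
    ∫⁻ x, f x ∂P = 3⁻¹ * ∑ i, ∫⁻ x, f (Smap i x) ∂P := by
  conv_lhs => rw [eq_smul_sum_map (P := P)]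
  simp only [lintegral_smul_measure, lintegral_finsetSum_measure, smul_eq_mul,
    lintegral_map hf (measurable_Smap _)]

lemma ae_le_zero_of_comp_Smap_le {g : E2 → ℝ} (hg : Measurable g)
    (hgS : ∀ i x, g (Smap i x) ≤ g x / 3) : ∀ᵐ x ∂P, g x ≤ 0 := by
  have scale (t : ℝ) : P (g ⁻¹' Set.Iic (3 * t)) ≤ P (g ⁻¹' Set.Iic t) := by
    have hm := hg (measurableSet_Iic (a := t))
    conv_rhs => rw [eq_smul_sum_map (P := P)]
    calc P (g ⁻¹' Set.Iic (3 * t))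
        = 3⁻¹ * ∑ _i : Fin 3, P (g ⁻¹' Set.Iic (3 * t)) := by
          simp [← mul_assoc, ENNReal.inv_mul_cancel]
      _ ≤ 3⁻¹ * ∑ i, P.map (Smap i) (g ⁻¹' Set.Iic t) := by
          refine mul_le_mul_right (Finset.sum_le_sum fun i _ => ?_) _
          rw [Measure.map_apply (measurable_Smap i) hm]
          refine measure_mono fun x (hx : g x ≤ 3 * t) => (hgS i x).trans ?_
          linarith
      _ = _ := by simp
  have iterate (t : ℝ) (n : ℕ) : P (g ⁻¹' Set.Iic (3 ^ n * t)) ≤ P (g ⁻¹' Set.Iic t) := by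
    induction n with
    | zero => simp
    | succ n ih =>
      rw [pow_succ', mul_assoc]
      exact (scale _).trans ih
  have ae_le {t : ℝ} (ht : 0 < t) : ∀ᵐ x ∂P, g x ≤ t := by
    have lim := (tendsto_measure_Iic_atTop (P.map g)).comp
      ((tendsto_pow_atTop_atTop_of_one_lt (r := (3 : ℝ)) (by norm_num)).atTop_mul_const ht)
    simp only [Function.comp_def, Measure.map_apply hg measurableSet_Iic,
      Measure.map_apply hg .univ, Set.preimage_univ, measure_univ] at lim
    exact (mem_ae_iff_prob_eq_one (hg measurableSet_Iic)).2
      (prob_le_one.antisymm (le_of_tendsto' lim (iterate t)))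
  have := ae_all_iff.2 fun n : ℕ => ae_le (Nat.one_div_pos_of_nat (n := n))
  filter_upwards [this] with x hx
  exact ge_of_tendsto' tendsto_one_div_add_atTop_nhds_zero_nat hx

lemma ae_bary_nonneg (k : Fin 3) : ∀ᵐ x ∂P, 0 ≤ bary k x := by
  have := ae_le_zero_of_comp_Smap_le (P := P) (continuous_bary k).measurable.neg fun i x => by
    simp only [Pi.neg_apply, bary_Smap]
    split_ifs <;> linarith
  filter_upwards [this] with x hx using neg_nonpos.1 hx

lemma ae_norm_sub_centroid_le_one : ∀ᵐ x ∂P, ‖x - centroid‖ ≤ 1 := by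
  have := ae_le_zero_of_comp_Smap_le (P := P) (g := fun x => ‖x - centroid‖ - 1)
    (by fun_prop) fun i x => by linarith [norm_Smap_sub_centroid_le i x]
  filter_upwards [this] with x hx using sub_nonpos.1 hx

section Bochner

variable {E : Type*} [NormedAddCommGroup E]

lemma integrable_of_continuous {f : E2 → E} (hf : Continuous f) : Integrable f P := by
  obtain ⟨C, hC⟩ := (isCompact_closedBall centroid 1).exists_bound_of_continuousOn hf.continuousOn
  refine .of_bound (C := C) hf.aestronglyMeasurable ?_
  filter_upwards [ae_norm_sub_centroid_le_one] with x hx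
  exact hC x (mem_closedBall_iff_norm.2 hx)

variable [NormedSpace ℝ E]

lemma three_smul_integral_eq {f : E2 → E} (hf : Continuous f) :
    (3 : ℝ) • ∫ x, f x ∂P = ∫ x, ∑ i, f (Smap i x) ∂P := by
  have hfS (i : Fin 3) : Integrable (fun x => f (Smap i x)) P :=
    integrable_of_continuous (hf.comp (continuous_Smap i))
  have hf' (i : Fin 3) : Integrable f (P.map (Smap i)) :=
    (integrable_map_measure hf.aestronglyMeasurable (measurable_Smap i).aemeasurable).2 (hfS i)
  conv_lhs => rw [eq_smul_sum_map (P := P)]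
  rw [integral_smul_measure, integral_finsetSum_measure fun i _ => hf' i,
    integral_finsetSum _ fun i _ => hfS i]
  simp only [integral_map (measurable_Smap _).aemeasurable hf.aestronglyMeasurable, smul_smul]
  norm_num

end Bochner

lemma integral_bary (k : Fin 3) : ∫ x, bary k x ∂P = 1 / 3 := by
  have h := three_smul_integral_eq (P := P) (continuous_bary k)
  have hS (x : E2) : ∑ i, bary k (Smap i x) = bary k x + 2 / 3 := by
    simp only [bary_Smap, ← Finset.sum_div, Finset.sum_add_distrib, ← Finset.mul_sum]
    simp
    ring
  simp only [hS, integral_add (integrable_of_continuous (continuous_bary k)) (integrable_const _),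
    integral_const, probReal_univ, smul_eq_mul] at h
  linarith

lemma integral_norm_sub_centroid_sq : ∫ x, ‖x - centroid‖ ^ 2 ∂P = 1 / 6 := by
  have h := three_smul_integral_eq (P := P) (f := fun x => ‖x - centroid‖ ^ 2) (by fun_prop)
  simp only [sum_norm_Smap_sub_centroid_sq] at h
  rw [integral_add ((integrable_of_continuous (by fun_prop)).div_const _) (integrable_const _),
    integral_div, integral_const, probReal_univ, smul_eq_mul, smul_eq_mul] at h
  linarith

lemma integral_sub_centroid : ∫ x, (x - centroid) ∂P = 0 := by
  have h := three_smul_integral_eq (P := P) (f := fun x => x - centroid) (by fun_prop)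
  simp only [sum_Smap_sub_centroid] at h
  have : (2 : ℝ) • ∫ x, (x - centroid) ∂P = 0 := by
    rw [← sub_eq_zero] at h
    rw [← h]
    module
  exact (smul_eq_zero.1 this).resolve_left two_ne_zero

lemma integral_norm_sub_sq (a : E2) :
    ∫ x, ‖x - a‖ ^ 2 ∂P = 1 / 6 + ‖centroid - a‖ ^ 2 := by
  have h (x : E2) : ‖x - a‖ ^ 2 = ‖x - centroid‖ ^ 2
      + 2 * inner ℝ (centroid - a) (x - centroid) + ‖centroid - a‖ ^ 2 := by
    rw [← sub_add_sub_cancel x centroid a, norm_add_sq_real, real_inner_comm]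
  rw [integral_congr_ae (.of_forall h),
    integral_add (integrable_of_continuous (by fun_prop)) (integrable_const _),
    integral_add (integrable_of_continuous (by fun_prop)) (integrable_of_continuous (by fun_prop)),
    integral_const_mul, integral_inner (integrable_of_continuous (by fun_prop)),
    integral_norm_sub_centroid_sq, integral_sub_centroid]
  simp

lemma err_singleton (a : E2) :
    err P {a} = ENNReal.ofReal (1 / 6 + ‖centroid - a‖ ^ 2) := by
  rw [← integral_norm_sub_sq (P := P),
    ofReal_integral_eq_lintegral_ofReal (integrable_of_continuous (by fun_prop))
      (.of_forall fun x => sq_nonneg _)]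
  simp [err]

lemma lintegral_ofReal_bary (k : Fin 3) : ∫⁻ x, ENNReal.ofReal (bary k x) ∂P = 3⁻¹ := by
  rw [← ofReal_integral_eq_lintegral_ofReal (integrable_of_continuous (continuous_bary k))
    (ae_bary_nonneg k), integral_bary, one_div, ENNReal.ofReal_inv_of_pos three_pos,
    ENNReal.ofReal_ofNat]

lemma lintegral_ofReal_le_of_convexOn {f : E2 → ℝ} (hf : ConvexOn ℝ Set.univ f) :
    ∫⁻ x, ENNReal.ofReal (f x) ∂P ≤ 3⁻¹ * ∑ k, ENNReal.ofReal (f (vertex k)) := by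
  have hle : ∀ᵐ x ∂P, ENNReal.ofReal (f x) ≤
      ∑ k, ENNReal.ofReal (bary k x) * ENNReal.ofReal (f (vertex k)) := by
    filter_upwards [ae_all_iff.2 (ae_bary_nonneg (P := P))] with x hx
    have := hf.map_sum_le (fun k _ => hx k) (sum_bary x) fun k _ => Set.mem_univ (vertex k)
    rw [sum_bary_smul_vertex] at this
    calc ENNReal.ofReal (f x) ≤ ENNReal.ofReal (∑ k, bary k x • f (vertex k)) :=
          ENNReal.ofReal_le_ofReal this
      _ ≤ ∑ k, ENNReal.ofReal (bary k x • f (vertex k)) :=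
          Finset.le_sum_of_subadditive _ ENNReal.ofReal_zero.le
            (fun _ _ => ENNReal.ofReal_add_le) _ _
      _ = _ := by simp only [smul_eq_mul, ENNReal.ofReal_mul (hx _)]
  calc ∫⁻ x, ENNReal.ofReal (f x) ∂P
      ≤ ∫⁻ x, ∑ k, ENNReal.ofReal (bary k x) * ENNReal.ofReal (f (vertex k)) ∂P :=
        lintegral_mono_ae hle
    _ = ∑ k, 3⁻¹ * ENNReal.ofReal (f (vertex k)) := by
        have hm (k : Fin 3) : Measurable fun x => ENNReal.ofReal (bary k x) :=
          (continuous_bary k).measurable.ennreal_ofReal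
        rw [lintegral_finsetSum _ fun k _ => (hm k).mul_const _]
        simp only [lintegral_mul_const _ (hm _), lintegral_ofReal_bary]
    _ = _ := by rw [Finset.mul_sum]

lemma lintegral_ofReal_le_sum_Smap_vertex {f : E2 → ℝ} (hf : ConvexOn ℝ Set.univ f)
    (hfm : Measurable f) :
    ∫⁻ x, ENNReal.ofReal (f x) ∂P ≤
      9⁻¹ * ∑ v : Fin 3 × Fin 3, ENNReal.ofReal (f (Smap v.1 (vertex v.2))) := by
  have hS (i : Fin 3) : ConvexOn ℝ Set.univ fun x => f (Smap i x) := by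
    rw [Smap_eq_homothety]
    exact hf.comp_affineMap _
  calc ∫⁻ x, ENNReal.ofReal (f x) ∂P
      = 3⁻¹ * ∑ i, ∫⁻ x, ENNReal.ofReal (f (Smap i x)) ∂P := lintegral_eq hfm.ennreal_ofReal
    _ ≤ 3⁻¹ * ∑ i, 3⁻¹ * ∑ j, ENNReal.ofReal (f (Smap i (vertex j))) := by
        gcongr with i
        exact lintegral_ofReal_le_of_convexOn (hS i)
    _ = _ := by
        rw [← Finset.mul_sum, ← mul_assoc, Fintype.sum_prod_type,
          ← ENNReal.mul_inv (by simp) (by simp)]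
        norm_num

end IsRMeasure

/-! ### The gain of a point -/

/-- The saving at `x` when `x` is served from `a`, relative to the benchmark cost
`‖x - centroid‖ ^ 2 + 2 / 27`, that is, to a cell served from its centroid at the price `2 / 27`
per point. -/
def excess (a x : E2) : ℝ := ‖x - centroid‖ ^ 2 + 2 / 27 - ‖x - a‖ ^ 2

/-- The vertex `v.2` of the cell `Smap v.1 '' Tri`. -/
def cellVertex (v : Fin 3 × Fin 3) : E2 := Smap v.1 (vertex v.2)

/-- An upper bound for the integral of the positive part of `excess a`, read off from the vertices
of the three cells of level one. -/
def vertexGain (a : E2) : ℝ :=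
  (∑ v : Fin 3 × Fin 3, max (excess a (cellVertex v)) 0) / 9

/-- The total gain of the point `a` over all the cells of level `ℓ`, measured in the rescaled
coordinates of the cells. -/
def levelGain : ℕ → E2 → ℝ
  | 0 => vertexGain
  | ℓ + 1 => fun a => ∑ i, levelGain ℓ (zoom i a)

lemma vertexGain_nonneg (a : E2) : 0 ≤ vertexGain a := by
  unfold vertexGain
  positivity

lemma levelGain_nonneg (ℓ : ℕ) (a : E2) : 0 ≤ levelGain ℓ a := by
  induction ℓ generalizing a with
  | zero => exact vertexGain_nonneg a
  | succ ℓ ih => exact Finset.sum_nonneg fun i _ => ih (zoom i a)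

lemma excess_eq (a x : E2) :
    excess a x = innerₗ E2 ((2 : ℝ) • (a - centroid)) x + (‖centroid‖ ^ 2 - ‖a‖ ^ 2 + 2 / 27) := by
  simp only [excess, norm_sub_sq_real, innerₗ_apply_apply, real_inner_comm x,
    inner_smul_right, inner_sub_right]
  ring

lemma convexOn_excess (a : E2) : ConvexOn ℝ Set.univ (excess a) := by
  rw [funext (excess_eq a)]
  exact ((innerₗ E2 _).convexOn convex_univ).add_const _

lemma measurable_excess (a : E2) : Measurable (excess a) := by
  unfold excess
  fun_prop

lemma lintegral_ofReal_excess_le (P : Measure E2) [IsRMeasure P] (a : E2) :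
    ∫⁻ x, ENNReal.ofReal (excess a x) ∂P ≤ ENNReal.ofReal (vertexGain a) := by
  calc _ ≤ 9⁻¹ * ∑ v : Fin 3 × Fin 3, ENNReal.ofReal (excess a (cellVertex v)) :=
        IsRMeasure.lintegral_ofReal_le_sum_Smap_vertex (convexOn_excess a) (measurable_excess a)
    _ = _ := by
        rw [vertexGain, ENNReal.ofReal_div_of_pos (by norm_num),
          ENNReal.ofReal_sum_of_nonneg fun _ _ => le_max_right _ _, ENNReal.div_eq_inv_mul]
        simp [ENNReal.ofReal_max]

/-- The barycentric coordinates of `cellVertex v`, multiplied by three. -/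
def cellCoord (v : Fin 3 × Fin 3) (k : Fin 3) : ℤ :=
  2 * (if v.1 = k then 1 else 0) + if v.2 = k then 1 else 0

lemma bary_cellVertex (v : Fin 3 × Fin 3) (k : Fin 3) :
    bary k (cellVertex v) = cellCoord v k / 3 := by
  rw [cellVertex, bary_Smap, bary_vertex, cellCoord]
  push_cast
  ring

lemma sum_cellCoord (v : Fin 3 × Fin 3) : ∑ k, cellCoord v k = 3 := by
  simp [cellCoord, Finset.sum_add_distrib]

lemma excess_cellVertex (a : E2) (v : Fin 3 × Fin 3) :
    excess a (cellVertex v) = ∑ k, (cellCoord v k * bary k a / 3 - bary k a ^ 2 / 2) - 5 / 54 := by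
  have h : (∑ k, cellCoord v k : ℝ) = 3 := mod_cast sum_cellCoord v
  simp only [excess, norm_sub_sq_eq_sum_bary, bary_centroid, bary_cellVertex,
    Fin.sum_univ_three] at h ⊢
  linear_combination -h / 9

lemma three_mul_sum_sq_sum_cellCoord_le : ∀ A : Finset (Fin 3 × Fin 3),
    3 * ∑ k, (∑ v ∈ A, cellCoord v k) ^ 2 ≤ 5 * (A.card : ℤ) ^ 2 + 36 * A.card := by
  decide +kernel

lemma sum_excess_cellVertex_le (a : E2) (A : Finset (Fin 3 × Fin 3)) :
    ∑ v ∈ A, excess a (cellVertex v) ≤ 2 / 3 := by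
  obtain rfl | hA := A.eq_empty_or_nonempty
  · norm_num
  have hpos : 0 < 18 * (A.card : ℝ) := mul_pos (by norm_num) (mod_cast hA.card_pos)
  set s : Fin 3 → ℝ := fun k => ∑ v ∈ A, (cellCoord v k : ℝ)
  have hs : 3 * ∑ k, s k ^ 2 ≤ 5 * (A.card : ℝ) ^ 2 + 36 * A.card := by
    have := three_mul_sum_sq_sum_cellCoord_le A
    rify at this
    exact this
  have amgm (k : Fin 3) :
      s k * bary k a / 3 - A.card * (bary k a ^ 2 / 2) ≤ s k ^ 2 / (18 * A.card) := by
    rw [le_div_iff₀ hpos]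
    linarith [sq_nonneg (s k - 3 * A.card * bary k a)]
  calc ∑ v ∈ A, excess a (cellVertex v)
      = ∑ k, (s k * bary k a / 3 - A.card * (bary k a ^ 2 / 2)) - A.card * (5 / 54) := by
        simp only [excess_cellVertex, Finset.sum_sub_distrib, Finset.sum_const, nsmul_eq_mul, s]
        rw [Finset.sum_comm]
        simp only [Finset.sum_mul, Finset.sum_div, Finset.mul_sum]
    _ ≤ ∑ k, s k ^ 2 / (18 * A.card) - A.card * (5 / 54) := by
        gcongr with k
        exact amgm k
    _ ≤ 2 / 3 := by
        rw [← Finset.sum_div, sub_le_iff_le_add, div_le_iff₀ hpos]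
        linarith

lemma vertexGain_le (a : E2) : vertexGain a ≤ 2 / 27 := by
  have := sum_excess_cellVertex_le a {v | 0 < excess a (cellVertex v)}
  rw [Finset.sum_filter] at this
  have hmax (v : Fin 3 × Fin 3) : max (excess a (cellVertex v)) 0
      = if 0 < excess a (cellVertex v) then excess a (cellVertex v) else 0 := by
    split_ifs with h
    · exact max_eq_left h.le
    · exact max_eq_right (not_lt.1 h)
  simp only [vertexGain, hmax]
  linarith

lemma cellCoord_separation : ∀ i j, i ≠ j → ∀ v w,
    6 * ∑ k, ((cellCoord v k - 1) ^ 2 + (cellCoord w k - 1) ^ 2) + 16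
      ≤ 3 * ∑ k, (cellCoord v k - cellCoord w k - 2 * (cellCoord (j, j) k - cellCoord (i, i) k)) ^ 2
        + if v = (j, j) ∧ w = (i, i) then 34 else 0 := by
  decide +kernel

lemma excess_zoom_add_excess_zoom_le {i j : Fin 3} (hij : i ≠ j) (a : E2) (v w : Fin 3 × Fin 3) :
    excess (zoom i a) (cellVertex v) + excess (zoom j a) (cellVertex w)
      ≤ if v = (j, j) ∧ w = (i, i) then 17 / 54 else 0 := by
  have hzoom (i k : Fin 3) : bary k (zoom i a) = 3 * bary k a - 2 * (cellCoord (i, i) k / 3) := by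
    rw [bary_zoom, cellCoord]
    push_cast
    ring
  -- `zoom i a - zoom j a` does not depend on `a`, so `x ^ 2 + y ^ 2 ≥ (x - y) ^ 2 / 2` gives a
  -- bound free of `a`.
  have parallelogram (k : Fin 3) :
      ((cellCoord v k - cellCoord w k - 2 * (cellCoord (j, j) k - cellCoord (i, i) k)) ^ 2 / 36 : ℝ)
        ≤ (cellCoord v k / 3 - bary k (zoom i a)) ^ 2 / 2
          + (cellCoord w k / 3 - bary k (zoom j a)) ^ 2 / 2 := by
    rw [hzoom, hzoom]
    linarith [sq_nonneg ((cellCoord v k + cellCoord w k + 2 * cellCoord (i, i) k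
      + 2 * cellCoord (j, j) k) / 3 - 6 * bary k a)]
  have sep := cellCoord_separation i j hij v w
  simp only [excess, norm_sub_sq_eq_sum_bary, bary_centroid, bary_cellVertex,
    Fin.sum_univ_three] at sep ⊢
  split_ifs at sep ⊢ <;> rify at sep <;>
    linarith [parallelogram 0, parallelogram 1, parallelogram 2]

lemma exists_excess_pos_of_vertexGain_ne_zero {a : E2} (h : vertexGain a ≠ 0) :
    ∃ v, 0 < excess a (cellVertex v) := by
  contrapose! h
  simp [vertexGain, max_eq_right (h _)]

lemma vertexGain_zoom_add_vertexGain_zoom_le {i j : Fin 3} (hij : i ≠ j) {a : E2}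
    (hi : vertexGain (zoom i a) ≠ 0) (hj : vertexGain (zoom j a) ≠ 0) :
    vertexGain (zoom i a) + vertexGain (zoom j a) ≤ 4 / 81 := by
  have active {v w} (hv : 0 < excess (zoom i a) (cellVertex v))
      (hw : 0 < excess (zoom j a) (cellVertex w)) : v = (j, j) ∧ w = (i, i) := by
    by_contra h
    have := excess_zoom_add_excess_zoom_le hij a v w
    rw [if_neg h] at this
    linarith
  obtain ⟨v, hv⟩ := exists_excess_pos_of_vertexGain_ne_zero hi
  obtain ⟨w, hw⟩ := exists_excess_pos_of_vertexGain_ne_zero hj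
  have gain_i : vertexGain (zoom i a) = excess (zoom i a) (cellVertex v) / 9 := by
    rw [vertexGain, Fintype.sum_eq_single v, max_eq_left hv.le]
    intro v' hne
    refine max_eq_right (not_lt.1 fun hv' => hne ?_)
    rw [(active hv' hw).1, (active hv hw).1]
  have gain_j : vertexGain (zoom j a) = excess (zoom j a) (cellVertex w) / 9 := by
    rw [vertexGain, Fintype.sum_eq_single w, max_eq_left hw.le]
    intro w' hne
    refine max_eq_right (not_lt.1 fun hw' => hne ?_)
    rw [(active hv hw').2, (active hv hw).2]
  have := excess_zoom_add_excess_zoom_le hij a v w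
  rw [if_pos (active hv hw)] at this
  linarith

lemma norm_sub_centroid_lt_of_vertexGain_ne_zero {a : E2} (h : vertexGain a ≠ 0) :
    ‖a - centroid‖ < 3 / 2 := by
  obtain ⟨v, hv⟩ := exists_excess_pos_of_vertexGain_ne_zero h
  have hvc : ‖cellVertex v - centroid‖ ≤ 3 / 5 :=
    (norm_Smap_sub_centroid_le _ _).trans (by linarith [norm_vertex_sub_centroid_le v.2])
  have hva : ‖cellVertex v - a‖ < 2 / 3 := by
    unfold excess at hv
    refine lt_of_pow_lt_pow_left₀ 2 (by norm_num) ?_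
    linarith [pow_le_pow_left₀ (norm_nonneg _) hvc 2]
  have := norm_sub_le_norm_sub_add_norm_sub a (cellVertex v) centroid
  rw [norm_sub_rev a (cellVertex v)] at this
  linarith

lemma exists_levelGain_zoom_ne_zero {ℓ : ℕ} {a : E2} (h : levelGain (ℓ + 1) a ≠ 0) :
    ∃ i, levelGain ℓ (zoom i a) ≠ 0 := by
  obtain ⟨i, -, hi⟩ := Finset.exists_ne_zero_of_sum_ne_zero h
  exact ⟨i, hi⟩

lemma norm_sub_centroid_lt_one_of_norm_zoom_lt {i : Fin 3} {a : E2}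
    (h : ‖zoom i a - centroid‖ < 3 / 2) : ‖a - centroid‖ < 1 := by
  have := norm_Smap_sub_centroid_le i (zoom i a)
  rw [Smap_zoom] at this
  linarith

lemma norm_sub_centroid_lt_of_levelGain_ne_zero {ℓ : ℕ} {a : E2} (h : levelGain ℓ a ≠ 0) :
    ‖a - centroid‖ < 3 / 2 := by
  induction ℓ generalizing a with
  | zero => exact norm_sub_centroid_lt_of_vertexGain_ne_zero h
  | succ ℓ ih =>
    obtain ⟨i, hi⟩ := exists_levelGain_zoom_ne_zero h
    linarith [norm_sub_centroid_lt_one_of_norm_zoom_lt (ih hi)]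

lemma norm_sub_centroid_lt_one_of_levelGain_succ_ne_zero {ℓ : ℕ} {a : E2}
    (h : levelGain (ℓ + 1) a ≠ 0) : ‖a - centroid‖ < 1 := by
  obtain ⟨i, hi⟩ := exists_levelGain_zoom_ne_zero h
  exact norm_sub_centroid_lt_one_of_norm_zoom_lt (norm_sub_centroid_lt_of_levelGain_ne_zero hi)

lemma norm_zoom_sub_zoom {i j : Fin 3} (hij : i ≠ j) (a : E2) : ‖zoom i a - zoom j a‖ = 2 := by
  have h : zoom i a - zoom j a = (2 : ℝ) • (vertex j - vertex i) := by
    rw [zoom_apply, zoom_apply]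
    module
  have := norm_vertex_sub_vertex_sq hij.symm
  rw [h, norm_smul, (pow_eq_one_iff_of_nonneg (norm_nonneg _) two_ne_zero).1 this]
  norm_num

lemma levelGain_zoom_add_levelGain_zoom_le {i j : Fin 3} (hij : i ≠ j) {ℓ : ℕ} {a : E2}
    (hi : levelGain ℓ (zoom i a) ≠ 0) (hj : levelGain ℓ (zoom j a) ≠ 0) :
    levelGain ℓ (zoom i a) + levelGain ℓ (zoom j a) ≤ 4 / 81 := by
  cases ℓ with
  | zero => exact vertexGain_zoom_add_vertexGain_zoom_le hij hi hj
  | succ ℓ =>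
    -- Both points would lie within distance `1` of the centroid, but they are `2` apart.
    have := norm_sub_le_norm_sub_add_norm_sub (zoom i a) centroid (zoom j a)
    rw [norm_zoom_sub_zoom hij, norm_sub_rev centroid] at this
    linarith [norm_sub_centroid_lt_one_of_levelGain_succ_ne_zero hi,
      norm_sub_centroid_lt_one_of_levelGain_succ_ne_zero hj]

lemma sum_fin_three_le {x : Fin 3 → ℝ} {B : ℝ} (h₁ : ∀ i, x i ≤ B)
    (h₂ : ∀ i j, i ≠ j → x i ≠ 0 → x j ≠ 0 → x i + x j ≤ 2 / 3 * B) :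
    ∑ i, x i ≤ B := by
  rw [Fin.sum_univ_three]
  grind

theorem levelGain_le (ℓ : ℕ) (a : E2) : levelGain ℓ a ≤ 2 / 27 := by
  induction ℓ generalizing a with
  | zero => exact vertexGain_le a
  | succ ℓ ih =>
    refine sum_fin_three_le (fun i => ih (zoom i a)) fun i j hij hi hj => ?_
    linarith [levelGain_zoom_add_levelGain_zoom_le hij hi hj]

/-! ### Distortion of unions over cells -/

lemma err_anti (μ : Measure E2) : Antitone (err μ) :=
  fun _ _ h => lintegral_mono fun _ => biInf_mono h

lemma measurable_biInf_ofReal_norm_sub_sq {α : Set E2} (hα : α.Countable) :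
    Measurable fun x : E2 => ⨅ a ∈ α, ENNReal.ofReal (‖x - a‖ ^ 2) :=
  Measurable.biInf α hα fun a _ => by fun_prop

section RMeasure

variable {P : Measure E2} [IsRMeasure P]

lemma err_eq_sum_err_image_zoom {α : Set E2} (hα : α.Countable) :
    err P α = 27⁻¹ * ∑ i, err P (zoom i '' α) := by
  have hscale (i : Fin 3) (x : E2) : ⨅ a ∈ α, ENNReal.ofReal (‖Smap i x - a‖ ^ 2)
      = 9⁻¹ * ⨅ b ∈ zoom i '' α, ENNReal.ofReal (‖x - b‖ ^ 2) := by
    simp_rw [iInf_image, ENNReal.mul_iInf_of_ne (a := 9⁻¹) (by simp) (by simp)]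
    congr! 4 with a
    rw [norm_Smap_sub, mul_pow, ENNReal.ofReal_mul (by positivity), inv_pow,
      ENNReal.ofReal_inv_of_pos (by norm_num)]
    norm_num
  calc err P α
      = 3⁻¹ * ∑ i, ∫⁻ x, 9⁻¹ * ⨅ b ∈ zoom i '' α, ENNReal.ofReal (‖x - b‖ ^ 2) ∂P := by
        simp only [err, IsRMeasure.lintegral_eq (measurable_biInf_ofReal_norm_sub_sq hα), hscale]
    _ = 3⁻¹ * ∑ i, 9⁻¹ * err P (zoom i '' α) := by
        simp only [err, lintegral_const_mul _ (measurable_biInf_ofReal_norm_sub_sq (hα.image _))]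
    _ = _ := by
        rw [← Finset.mul_sum, ← mul_assoc, ← ENNReal.mul_inv (by simp) (by simp)]
        norm_num

lemma twentySeven_mul_err_eq {α : Set E2} (hα : α.Countable) :
    27 * err P α = ∑ i, err P (zoom i '' α) := by
  rw [err_eq_sum_err_image_zoom hα, ← mul_assoc, ENNReal.mul_inv_cancel (by simp) (by simp),
    one_mul]

lemma twentySeven_mul_err_iUnion_le {γ : Fin 3 → Set E2} (hγ : ∀ i, (γ i).Countable) :
    27 * err P (⋃ i, Smap i '' γ i) ≤ ∑ i, err P (γ i) := by
  rw [twentySeven_mul_err_eq (Set.countable_iUnion fun i => (hγ i).image _)]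
  refine Finset.sum_le_sum fun i _ => err_anti P fun x hx => ?_
  exact ⟨Smap i x, Set.mem_iUnion.2 ⟨i, x, hx, rfl⟩, zoom_Smap i x⟩

lemma Sword_cons {ℓ : ℕ} (i : Fin 3) (ω : Fin ℓ → Fin 3) :
    Sword (Fin.cons i ω) = Smap i ∘ Sword ω := by
  funext x
  simp [Sword, List.ofFn_succ]

lemma pow_mul_err_iUnion_le {ℓ : ℕ} {β : (Fin ℓ → Fin 3) → Set E2} (hβ : ∀ ω, (β ω).Countable) :
    27 ^ ℓ * err P (⋃ ω, Sword ω '' β ω) ≤ ∑ ω, err P (β ω) := by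
  induction ℓ with
  | zero =>
    have hunion : ⋃ ω, Sword ω '' β ω = β default :=
      (Set.iUnion_eq_const fun ω => by rw [Subsingleton.elim ω default]; exact Set.image_id _)
    rw [hunion, pow_zero, one_mul, Fintype.sum_subsingleton _ default]
  | succ ℓ ih =>
    have hunion : ⋃ ω, Sword ω '' β ω
        = ⋃ i, Smap i '' ⋃ τ, Sword τ '' β (Fin.cons i τ) := by
      rw [← (Fin.consEquiv fun _ : Fin (ℓ + 1) => Fin 3).surjective.iUnion_comp]
      rw [Set.iUnion_prod']
      simp only [Set.image_iUnion, ← Set.image_comp, ← Sword_cons]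
      rfl
    calc 27 ^ (ℓ + 1) * err P (⋃ ω, Sword ω '' β ω)
        ≤ 27 ^ ℓ * ∑ i, err P (⋃ τ, Sword τ '' β (Fin.cons i τ)) := by
          rw [pow_succ, mul_assoc, hunion]
          gcongr
          exact twentySeven_mul_err_iUnion_le fun i =>
            Set.countable_iUnion fun τ => (hβ _).image _
      _ ≤ ∑ i, ∑ τ, err P (β (Fin.cons i τ)) := by
          rw [Finset.mul_sum]
          exact Finset.sum_le_sum fun i _ => ih fun τ => hβ _
      _ = _ := by
          rw [← (Fin.consEquiv fun _ : Fin (ℓ + 1) => Fin 3).sum_comp, Fintype.sum_prod_type]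
          rfl

/-! ### Weak duality -/

lemma lintegral_ofReal_le_err_add_sum (μ : Measure E2) {ι : Type*} [Fintype ι] (a : ι → E2)
    {f : E2 → ℝ} (hf : Measurable f) :
    ∫⁻ x, ENNReal.ofReal (f x) ∂μ
      ≤ err μ (Set.range a) + ∑ i, ∫⁻ x, ENNReal.ofReal (f x - ‖x - a i‖ ^ 2) ∂μ := by
  have hm (i : ι) : Measurable fun x => ENNReal.ofReal (f x - ‖x - a i‖ ^ 2) := by fun_prop
  rw [err, ← lintegral_finsetSum _ fun i _ => hm i,
    ← lintegral_add_left (measurable_biInf_ofReal_norm_sub_sq (Set.finite_range a).countable)]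
  refine lintegral_mono fun x => ?_
  rw [iInf_range, ENNReal.iInf_add]
  refine le_iInf fun i => ?_
  calc ENNReal.ofReal (f x) = ENNReal.ofReal (‖x - a i‖ ^ 2 + (f x - ‖x - a i‖ ^ 2)) := by
        rw [add_sub_cancel]
    _ ≤ ENNReal.ofReal (‖x - a i‖ ^ 2) + ENNReal.ofReal (f x - ‖x - a i‖ ^ 2) :=
        ENNReal.ofReal_add_le
    _ ≤ _ := by
        gcongr
        exact Finset.single_le_sum (f := fun i => ENNReal.ofReal (f x - ‖x - a i‖ ^ 2))
          (fun _ _ => zero_le) (Finset.mem_univ i)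

lemma lintegral_ofReal_norm_sub_centroid_sq_add :
    ∫⁻ x, ENNReal.ofReal (‖x - centroid‖ ^ 2 + 2 / 27) ∂P = ENNReal.ofReal (13 / 54) := by
  rw [← ofReal_integral_eq_lintegral_ofReal
    (IsRMeasure.integrable_of_continuous (by fun_prop)) (.of_forall fun x => by positivity),
    integral_add (IsRMeasure.integrable_of_continuous (by fun_prop)) (integrable_const _),
    IsRMeasure.integral_norm_sub_centroid_sq]
  norm_num

lemma le_pow_mul_err_add_sum_levelGain (ℓ : ℕ) {ι : Type*} [Fintype ι] (a : ι → E2) :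
    3 ^ ℓ * ENNReal.ofReal (13 / 54)
      ≤ 27 ^ ℓ * err P (Set.range a) + ∑ j, ENNReal.ofReal (levelGain ℓ (a j)) := by
  induction ℓ generalizing a with
  | zero =>
    rw [pow_zero, one_mul, pow_zero, one_mul, ← lintegral_ofReal_norm_sub_centroid_sq_add (P := P)]
    refine (lintegral_ofReal_le_err_add_sum P a (by fun_prop)).trans ?_
    gcongr with j
    exact lintegral_ofReal_excess_le P (a j)
  | succ ℓ ih =>
    have hgain (j : ι) : ENNReal.ofReal (levelGain (ℓ + 1) (a j))
        = ∑ i, ENNReal.ofReal (levelGain ℓ (zoom i (a j))) :=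
      ENNReal.ofReal_sum_of_nonneg fun i _ => levelGain_nonneg ℓ (zoom i (a j))
    calc 3 ^ (ℓ + 1) * ENNReal.ofReal (13 / 54)
        = ∑ _i : Fin 3, 3 ^ ℓ * ENNReal.ofReal (13 / 54) := by
          rw [Finset.sum_const, Finset.card_univ, Fintype.card_fin, nsmul_eq_mul]
          ring
      _ ≤ ∑ i, (27 ^ ℓ * err P (Set.range (zoom i ∘ a))
            + ∑ j, ENNReal.ofReal (levelGain ℓ (zoom i (a j)))) :=
          Finset.sum_le_sum fun i _ => ih (zoom i ∘ a)
      _ = _ := by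
          simp only [hgain, Finset.sum_add_distrib, ← Finset.mul_sum, Set.range_comp]
          rw [← twentySeven_mul_err_eq (Set.finite_range a).countable, ← mul_assoc, ← pow_succ,
            Finset.sum_comm]

lemma le_pow_mul_err_add_ncard_mul (ℓ : ℕ) {α : Set E2} (hα : α.Finite) :
    3 ^ ℓ * ENNReal.ofReal (13 / 54) ≤ 27 ^ ℓ * err P α + α.ncard * ENNReal.ofReal (2 / 27) := by
  have := hα.fintype
  calc 3 ^ ℓ * ENNReal.ofReal (13 / 54)
      ≤ 27 ^ ℓ * err P α + ∑ a : α, ENNReal.ofReal (levelGain ℓ a) := by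
        simpa using le_pow_mul_err_add_sum_levelGain (P := P) ℓ ((↑) : α → E2)
    _ ≤ 27 ^ ℓ * err P α + ∑ _a : α, ENNReal.ofReal (2 / 27) := by
        gcongr
        exact levelGain_le ℓ _
    _ = _ := by
        rw [Finset.sum_const, Finset.card_univ, nsmul_eq_mul, ← Nat.card_eq_fintype_card,
          Nat.card_coe_set_eq]

/-! ### Optimal sets -/

lemma quantErr_two_le : quantErr P 2 ≤ ENNReal.ofReal (5 / 54) := by
  let d : E2 := vertex 1 - vertex 0
  -- Both `Smap 0 (centroid + d)` and `Smap 1 (centroid - d)` are the common centroid of the cells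
  -- `0` and `1`, so the three cells are served from only two points.
  let γ : Fin 3 → E2 := ![centroid + d, centroid - d, centroid]
  have hd : ‖d‖ ^ 2 = 1 := norm_vertex_sub_vertex_sq (by decide)
  have hshared : Smap 0 (centroid + d) = Smap 1 (centroid - d) := by
    simp only [Smap_apply, d]
    module
  have hunion : ⋃ i, Smap i '' {γ i} = {Smap 1 (centroid - d), Smap 2 centroid} := by
    ext x
    simp [Fin.exists_fin_succ, γ, hshared, eq_comm]
  have hcard : (⋃ i, Smap i '' {γ i}).ncard ≤ 2 := by
    rw [hunion]
    exact (Set.ncard_insert_le _ _).trans (by rw [Set.ncard_singleton])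
  have herr : 27 * err P (⋃ i, Smap i '' {γ i}) ≤ 27 * ENNReal.ofReal (5 / 54) := by
    calc 27 * err P (⋃ i, Smap i '' {γ i})
        ≤ ∑ i, err P {γ i} := twentySeven_mul_err_iUnion_le fun i => Set.countable_singleton _
      _ = ∑ i, ENNReal.ofReal (1 / 6 + ‖centroid - γ i‖ ^ 2) := by
          simp only [IsRMeasure.err_singleton]
      _ = ENNReal.ofReal (27 * (5 / 54)) := by
          rw [← ENNReal.ofReal_sum_of_nonneg fun i _ => by positivity]
          congr 1
          simp [Fin.sum_univ_three, γ, hd]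
          norm_num
      _ = 27 * ENNReal.ofReal (5 / 54) := by
          rw [ENNReal.ofReal_mul (by norm_num), ENNReal.ofReal_ofNat]
  exact (iInf₂_le _ ⟨Set.toFinite _, hcard⟩).trans
    ((ENNReal.mul_le_mul_iff_right (by simp) (by simp)).1 herr)

lemma isOptimal_iUnion_Sword_image {ℓ : ℕ} {β : (Fin ℓ → Fin 3) → Set E2}
    {N : (Fin ℓ → Fin 3) → ℕ} (hβ : ∀ ω, (β ω).Finite) (hcard : ∀ ω, (β ω).ncard ≤ N ω)
    (herr : ∀ ω, err P (β ω) + N ω * ENNReal.ofReal (2 / 27) ≤ ENNReal.ofReal (13 / 54)) :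
    IsOptimal P (∑ ω, N ω) (⋃ ω, Sword ω '' β ω) := by
  have hfin : (⋃ ω, Sword ω '' β ω).Finite := Set.finite_iUnion fun ω => (hβ ω).image _
  have hncard : (⋃ ω, Sword ω '' β ω).ncard ≤ ∑ ω, N ω :=
    (Set.ncard_iUnion_le_of_fintype _).trans
      (Finset.sum_le_sum fun ω _ => (Set.ncard_image_le (hβ ω)).trans (hcard ω))
  refine ⟨hfin, hncard, le_antisymm (le_iInf₂ fun α hα => ?_) (iInf₂_le _ ⟨hfin, hncard⟩)⟩
  set price := ENNReal.ofReal (2 / 27)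
  have hdual : 27 ^ ℓ * err P (⋃ ω, Sword ω '' β ω) + (∑ ω, N ω : ℕ) * price
      ≤ 27 ^ ℓ * err P α + (∑ ω, N ω : ℕ) * price := by
    calc 27 ^ ℓ * err P (⋃ ω, Sword ω '' β ω) + (∑ ω, N ω : ℕ) * price
        ≤ ∑ ω, err P (β ω) + (∑ ω, N ω : ℕ) * price := by
          gcongr
          exact pow_mul_err_iUnion_le fun ω => (hβ ω).countable
      _ = ∑ ω, (err P (β ω) + N ω * price) := by
          rw [Finset.sum_add_distrib, ← Finset.sum_mul, Nat.cast_sum]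
      _ ≤ ∑ _ω : Fin ℓ → Fin 3, ENNReal.ofReal (13 / 54) := Finset.sum_le_sum fun ω _ => herr ω
      _ = 3 ^ ℓ * ENNReal.ofReal (13 / 54) := by simp
      _ ≤ 27 ^ ℓ * err P α + α.ncard * price := le_pow_mul_err_add_ncard_mul ℓ hα.1
      _ ≤ _ := by
          gcongr
          exact hα.2
  have hprice : (∑ ω, N ω : ℕ) * price ≠ ∞ :=
    ENNReal.mul_ne_top (ENNReal.natCast_ne_top _) ENNReal.ofReal_ne_top
  exact (ENNReal.mul_le_mul_iff_right (by simp) (by simp)).1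
    ((ENNReal.add_le_add_iff_right hprice).1 hdual)

lemma err_centroid_add_le :
    err P {centroid} + (1 : ℕ) * ENNReal.ofReal (2 / 27) ≤ ENNReal.ofReal (13 / 54) := by
  rw [IsRMeasure.err_singleton, Nat.cast_one, one_mul,
    ← ENNReal.ofReal_add (by positivity) (by norm_num)]
  simp
  norm_num

lemma IsOptimal.err_two_add_le {α : Set E2} (hα : IsOptimal P 2 α) :
    err P α + (2 : ℕ) * ENNReal.ofReal (2 / 27) ≤ ENNReal.ofReal (13 / 54) := by
  calc err P α + (2 : ℕ) * ENNReal.ofReal (2 / 27)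
      ≤ ENNReal.ofReal (5 / 54) + (2 : ℕ) * ENNReal.ofReal (2 / 27) := by
        gcongr
        exact hα.2.2.trans_le quantErr_two_le
    _ = ENNReal.ofReal (13 / 54) := by
        rw [← ENNReal.ofReal_natCast, ← ENNReal.ofReal_mul (by norm_num),
          ← ENNReal.ofReal_add (by norm_num) (by norm_num)]
        norm_num

end RMeasure

open Classical in
lemma iUnion_image_ite_singleton {ι X Y : Type*} (f : ι → X → Y) (J : Set ι) (s : Set X) (c : X) :
    ⋃ i, f i '' (if i ∈ J then s else {c}) = (fun i => f i c) '' Jᶜ ∪ ⋃ i ∈ J, f i '' s := by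
  rw [Set.union_comm, ← Set.biUnion_of_singleton ((fun i => f i c) '' Jᶜ), Set.biUnion_image,
    ← Set.biUnion_univ, ← Set.union_compl_self J, Set.biUnion_union]
  congr! 5 with i hi i hi
  · rw [if_pos hi]
  · rw [if_neg hi, Set.image_singleton]

open Classical in
lemma sum_ite_mem_two_one {ι : Type*} [Fintype ι] (J : Set ι) :
    ∑ i, (if i ∈ J then 2 else 1) = Fintype.card ι + J.ncard := by
  have hsplit (i : ι) : (if i ∈ J then 2 else 1) = 1 + if i ∈ J then 1 else 0 := by
    split_ifs <;> rfl
  simp [hsplit, Finset.sum_add_distrib, Set.ncard_eq_toFinset_card']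

/-- For ℓ ≥ 1 and 3^ℓ < n ≤ 2·3^ℓ, any optimal set of two-means α₂, and any
J ⊆ {1,2,3}^ℓ with card J = n − 3^ℓ, the set
{S_ω(c) : ω ∉ J} ∪ ⋃_{ω ∈ J} S_ω(α₂) is an optimal set of n-means for the R-measure P,
where c = (1/2, √3/6). -/
theorem stmt_14 (P : Measure E2) [IsProbabilityMeasure P]
    (hP : P = (3 : ℝ≥0∞)⁻¹ • (P.map S1 + P.map S2 + P.map S3))
    (ℓ n : ℕ) (hℓ : 1 ≤ ℓ) (h1 : 3 ^ ℓ < n) (h2 : n ≤ 2 * 3 ^ ℓ)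
    (α₂ : Set E2) (hα₂ : IsOptimal P 2 α₂)
    (J : Set (Fin ℓ → Fin 3)) (hJ : J.ncard = n - 3 ^ ℓ) :
    IsOptimal P n
      ((fun ω : Fin ℓ → Fin 3 => Sword ω (pt (1/2) (Real.sqrt 3 / 6))) '' Jᶜ
        ∪ ⋃ ω ∈ J, Sword ω '' α₂) := by
  classical
  have : IsRMeasure P := ⟨by rw [Fin.sum_univ_three]; exact hP⟩
  have hn : n = ∑ ω, if ω ∈ J then 2 else 1 := by
    rw [sum_ite_mem_two_one, Fintype.card_fun, Fintype.card_fin, Fintype.card_fin]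
    omega
  rw [hn]
  change IsOptimal P _ ((fun ω => Sword ω centroid) '' Jᶜ ∪ _)
  rw [← iUnion_image_ite_singleton]
  refine isOptimal_iUnion_Sword_image (fun ω => ?_) (fun ω => ?_) (fun ω => ?_)
  · split_ifs
    exacts [hα₂.1, Set.finite_singleton _]
  · split_ifs
    exacts [hα₂.2.1, (Set.ncard_singleton _).le]
  · split_ifs
    exacts [hα₂.err_two_add_le, err_centroid_add_le]

end
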